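/- Let H be a Hilbert space and let A : Dom(A) ⊆ H → H be a densely defined closable operator such that the image of A is contained in the kernel of A (i.e. A² = 0 on its domain, in the sense that Im(A) ⊆ Ker(A̅)). Let A* denote the adjoint. Then H decomposes orthogonally as H = (Ker(A̅) ∩ Ker(A*)) ⊕ closure(Im(A)) ⊕ closure(Im(A*)). -/

import Mathlib

/-!
The kernel of an adjoint is the orthogonal complement of a range: `Ker T* = (Im T)ᗮ`. Since the
closure of a densely defined closable `S` is `S**`, likewise `Ker S̅ = (Im S*)ᗮ`. The inclusion
`Im T ⊆ Ker S̅` therefore says that `Im T ⟂ Im S*`, and the orthogonal complement of the sum of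
these two ranges is `Ker S̅ ∩ Ker T*`. This is the Hodge decomposition at the middle term of a
complex of Hilbert spaces `E → F → G`; taking `T = S = A` gives the case `A² = 0`. The identity
`S̅ = S**` is proved on graphs, where it becomes `Kᗮᗮ = closure K` in an `L²` product.
-/

open scoped RealInnerProductSpace

/-- The kernel of a partially defined linear operator, as a submodule of the ambient space. -/
def LinearPMap.kerSub {H : Type*} [NormedAddCommGroup H] [InnerProductSpace ℝ H]
    (A : H →ₗ.[ℝ] H) : Submodule ℝ H :=
  (LinearMap.ker A.toFun).map A.domain.subtype

section AdjointSubmodule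

variable {𝕜 E F : Type*} [RCLike 𝕜]
  [NormedAddCommGroup E] [InnerProductSpace 𝕜 E] [NormedAddCommGroup F] [InnerProductSpace 𝕜 F]

/-- A subspace of `E × F` viewed in the `L²` product, where orthogonal complements make sense:
`E × F` itself carries the sup norm, which has no inner product. -/
def l2Submodule (g : Submodule 𝕜 (E × F)) : Submodule 𝕜 (WithLp 2 (E × F)) :=
  g.comap (WithLp.linearEquiv 2 𝕜 (E × F)).toLinearMap

theorem topologicalClosure_l2Submodule (g : Submodule 𝕜 (E × F)) :
    (l2Submodule g).topologicalClosure = l2Submodule g.topologicalClosure :=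
  SetLike.coe_injective
    ((WithLp.prodContinuousLinearEquiv 2 𝕜 E F).toHomeomorph.preimage_closure g).symm

theorem mem_orthogonal_l2Submodule_iff {g : Submodule 𝕜 (E × F)} {w : WithLp 2 (E × F)} :
    w ∈ (l2Submodule g)ᗮ ↔ (w.snd, -w.fst) ∈ g.adjoint := by
  rw [Submodule.mem_orthogonal, Submodule.mem_adjoint_iff]
  constructor
  · intro h a b hab
    simpa [WithLp.prod_inner_apply, add_comm] using h (WithLp.toLp 2 (a, b)) hab
  · intro h u hu
    simpa [WithLp.prod_inner_apply, add_comm] using h u.fst u.snd hu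

theorem l2Submodule_adjoint_adjoint (g : Submodule 𝕜 (E × F)) :
    l2Submodule g.adjoint.adjoint = (l2Submodule g)ᗮᗮ := by
  ext x
  change x.ofLp ∈ g.adjoint.adjoint ↔ x ∈ (l2Submodule g)ᗮᗮ
  rw [Submodule.mem_adjoint_iff, Submodule.mem_orthogonal]
  constructor
  · intro h w hw
    have hx := h _ _ (mem_orthogonal_l2Submodule_iff.1 hw)
    rw [inner_neg_left, ← neg_add', neg_eq_zero] at hx
    simpa [WithLp.prod_inner_apply] using hx
  · intro h c d hcd
    have hx := h (WithLp.toLp 2 (-d, c)) (mem_orthogonal_l2Submodule_iff.2 (by simpa using hcd))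
    rw [← neg_eq_zero, neg_sub, sub_eq_neg_add]
    simpa [WithLp.prod_inner_apply] using hx

theorem adjoint_adjoint_eq_topologicalClosure [CompleteSpace E] [CompleteSpace F]
    (g : Submodule 𝕜 (E × F)) : g.adjoint.adjoint = g.topologicalClosure := by
  apply Submodule.comap_injective_of_surjective (WithLp.linearEquiv 2 𝕜 (E × F)).surjective
  change l2Submodule g.adjoint.adjoint = l2Submodule g.topologicalClosure
  rw [l2Submodule_adjoint_adjoint, Submodule.orthogonal_orthogonal_eq_closure,
    topologicalClosure_l2Submodule]

theorem mk_zero_mem_adjoint_iff {g : Submodule 𝕜 (E × F)} {y : F} :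
    (y, (0 : E)) ∈ g.adjoint ↔ y ∈ (g.map (LinearMap.snd 𝕜 E F))ᗮ := by
  simpa [Submodule.mem_orthogonal] using forall_comm

end AdjointSubmodule

section PartialKer

variable {R E F : Type*} [Ring R] [AddCommGroup E] [Module R E] [AddCommGroup F] [Module R F]

/-- The kernel of a partially defined operator, as a submodule of the ambient space. It extends
`LinearPMap.kerSub` to operators between two different modules, over an arbitrary ring. -/
def partialKer (T : E →ₗ.[R] F) : Submodule R E :=
  (LinearMap.ker T.toFun).map T.domain.subtype

theorem mem_partialKer_iff {T : E →ₗ.[R] F} {x : E} :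
    x ∈ partialKer T ↔ (x, (0 : F)) ∈ T.graph := by
  simp only [partialKer, Submodule.mem_map, LinearMap.mem_ker, LinearPMap.mem_graph_iff,
    Submodule.subtype_apply, LinearPMap.toFun_eq_coe, and_comm]

end PartialKer

section KernelOfAdjoint

variable {𝕜 E F : Type*} [RCLike 𝕜]
  [NormedAddCommGroup E] [InnerProductSpace 𝕜 E] [NormedAddCommGroup F] [InnerProductSpace 𝕜 F]

theorem mk_zero_mem_adjoint_graph_iff {T : E →ₗ.[𝕜] F} {y : F} :
    (y, (0 : E)) ∈ T.graph.adjoint ↔ y ∈ (LinearMap.range T.toFun)ᗮ := by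
  rw [mk_zero_mem_adjoint_iff, T.graph_map_snd_eq_range]

theorem partialKer_adjoint [CompleteSpace E] {T : E →ₗ.[𝕜] F}
    (hT : Dense (T.domain : Set E)) :
    partialKer T.adjoint = (LinearMap.range T.toFun)ᗮ := by
  ext y
  rw [mem_partialKer_iff, T.adjoint_graph_eq_graph_adjoint hT, mk_zero_mem_adjoint_graph_iff]

theorem partialKer_closure [CompleteSpace E] [CompleteSpace F] {T : E →ₗ.[𝕜] F}
    (hT : Dense (T.domain : Set E)) (hTc : T.IsClosable) :
    partialKer T.closure = (LinearMap.range T.adjoint.toFun)ᗮ := by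
  ext x
  rw [mem_partialKer_iff, ← hTc.graph_closure_eq_closure_graph,
    ← adjoint_adjoint_eq_topologicalClosure, ← T.adjoint_graph_eq_graph_adjoint hT,
    mk_zero_mem_adjoint_graph_iff]

end KernelOfAdjoint

theorem orthogonal_inf_orthogonal_sup_sup_eq_top {𝕜 E : Type*} [RCLike 𝕜]
    [NormedAddCommGroup E] [InnerProductSpace 𝕜 E] {K L : Submodule 𝕜 E}
    [K.HasOrthogonalProjection] [L.HasOrthogonalProjection] (h : K ≤ Lᗮ) :
    (Lᗮ ⊓ Kᗮ) ⊔ K ⊔ L = ⊤ :=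
  calc (Lᗮ ⊓ Kᗮ) ⊔ K ⊔ L = (K ⊔ Kᗮ ⊓ Lᗮ) ⊔ L := by rw [sup_comm _ K, inf_comm]
    _ = Lᗮ ⊔ L := by rw [Submodule.sup_orthogonal_inf_of_hasOrthogonalProjection h]
    _ = ⊤ := by rw [sup_comm, Submodule.sup_orthogonal_of_hasOrthogonalProjection]

theorem stmt_0_general {𝕜 E F G : Type*} [RCLike 𝕜]
    [NormedAddCommGroup E] [InnerProductSpace 𝕜 E] [CompleteSpace E]
    [NormedAddCommGroup F] [InnerProductSpace 𝕜 F] [CompleteSpace F]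
    [NormedAddCommGroup G] [InnerProductSpace 𝕜 G] [CompleteSpace G]
    (T : E →ₗ.[𝕜] F) (S : F →ₗ.[𝕜] G)
    (hT : Dense (T.domain : Set E)) (hS : Dense (S.domain : Set F)) (hSc : S.IsClosable)
    (hrange : LinearMap.range T.toFun ≤ partialKer S.closure) :
    (partialKer S.closure ⊓ partialKer T.adjoint) ≤
      ((LinearMap.range T.toFun).topologicalClosure)ᗮ ∧
    (partialKer S.closure ⊓ partialKer T.adjoint) ≤
      ((LinearMap.range S.adjoint.toFun).topologicalClosure)ᗮ ∧
    (LinearMap.range T.toFun).topologicalClosure ≤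
      ((LinearMap.range S.adjoint.toFun).topologicalClosure)ᗮ ∧
    (partialKer S.closure ⊓ partialKer T.adjoint) ⊔
      (LinearMap.range T.toFun).topologicalClosure ⊔
      (LinearMap.range S.adjoint.toFun).topologicalClosure = ⊤ := by
  have hkerS : partialKer S.closure = ((LinearMap.range S.adjoint.toFun).topologicalClosure)ᗮ := by
    rw [partialKer_closure hS hSc, Submodule.orthogonal_closure]
  have hkerT : partialKer T.adjoint = ((LinearMap.range T.toFun).topologicalClosure)ᗮ := by
    rw [partialKer_adjoint hT, Submodule.orthogonal_closure]
  rw [hkerS] at hrange ⊢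
  rw [hkerT]
  have hortho : (LinearMap.range T.toFun).topologicalClosure ≤
      ((LinearMap.range S.adjoint.toFun).topologicalClosure)ᗮ :=
    Submodule.topologicalClosure_minimal _ hrange (Submodule.isClosed_orthogonal _)
  exact ⟨inf_le_right, inf_le_left, hortho, orthogonal_inf_orthogonal_sup_sup_eq_top hortho⟩

/-- If `A` is a densely defined closable operator on a Hilbert space with
`Im(A) ⊆ Ker(A̅)` (i.e. `A² = 0`), then `H` decomposes orthogonally as
`(Ker(A̅) ∩ Ker(A*)) ⊕ closure(Im A) ⊕ closure(Im A*)`. -/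
theorem stmt_0 {H : Type*} [NormedAddCommGroup H] [InnerProductSpace ℝ H]
    [CompleteSpace H] (A : H →ₗ.[ℝ] H)
    (hdense : Dense (A.domain : Set H))
    (hclosable : A.IsClosable)
    (hrange : (LinearMap.range A.toFun : Set H) ⊆ (A.closure.kerSub : Set H)) :
    (A.closure.kerSub ⊓ A.adjoint.kerSub) ≤ ((LinearMap.range A.toFun).topologicalClosure)ᗮ ∧
    (A.closure.kerSub ⊓ A.adjoint.kerSub) ≤
      ((LinearMap.range A.adjoint.toFun).topologicalClosure)ᗮ ∧
    (LinearMap.range A.toFun).topologicalClosure ≤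
      ((LinearMap.range A.adjoint.toFun).topologicalClosure)ᗮ ∧
    (A.closure.kerSub ⊓ A.adjoint.kerSub) ⊔
      (LinearMap.range A.toFun).topologicalClosure ⊔
      (LinearMap.range A.adjoint.toFun).topologicalClosure = ⊤ :=
  stmt_0_general A A hdense hdense hclosable hrange
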